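/- Let G = (U, E) be an undirected graph with U = {u_1, …, u_r}, r ≥ 3, E = {e_1, …, e_s}, s ≥ 1, and let h be an integer with 1 ≤ h ≤ r−1. Consider the partial profile with 2r−1 voters, alternative set A = {p, b, d} ∪ {c_j : e_j ∈ E}, and agenda L: b ▷ d ▷ p ▷ c_s ▷ c_{s−1} ▷ … ▷ c_1 constructed from G and h as described. Then the edge alternative c_1 is the amendment winner under L in every completion of the vertex voters' partial orders if and only if G has no vertex cover of size at most h. -/

import Mathlib

open scoped Classical

/-- The number of voters in profile `prof` who strictly prefer `b` to `c`. -/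
noncomputable def prefCount {α : Type*} {n : ℕ} (prof : Fin n → α → α → Prop) (b c : α) : ℕ :=
  (Finset.univ.filter fun i => prof i b c).card

/-- Alternative `b` beats alternative `c`: more than `n/2` voters prefer `b` to `c`. -/
def Beats {α : Type*} {n : ℕ} (prof : Fin n → α → α → Prop) (b c : α) : Prop :=
  2 * prefCount prof b c > n

/-- `a` is an `S`-majority winner: more than `n/2` voters prefer `a`
to every alternative of `S \ {a}`. -/
def IsMajWinner {α : Type*} {n : ℕ} (prof : Fin n → α → α → Prop) (S : Finset α) (a : α) :
    Prop :=
  2 * (Finset.univ.filter fun i => ∀ c ∈ S, c ≠ a → prof i a c).card > n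

/-- The successive winner for the agenda given as a list: the first alternative of the
agenda that is a majority winner with respect to itself and all later alternatives. -/
noncomputable def succWinner {α : Type*} [DecidableEq α] {n : ℕ}
    (prof : Fin n → α → α → Prop) : List α → Option α
  | [] => none
  | a :: rest =>
    if IsMajWinner prof ((a :: rest).toFinset) a then some a
    else succWinner prof rest

/-- The amendment winner for the agenda given as a list: the current round winner is
challenged by the next alternative on the agenda, which takes over if it beats it. -/
noncomputable def amendWinner {α : Type*} {n : ℕ}
    (prof : Fin n → α → α → Prop) : List α → Option α
  | [] => none
  | a :: rest => some (rest.foldl (fun win c => if Beats prof c win then c else win) a)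

/-- The alternatives of the reduction: the preferred alternative `P`, the helper
alternative `B`, the dummy alternative `D`, and one edge alternative `C j` for each
edge `e_j`. -/
inductive Alt (s : ℕ) : Type
  | P : Alt s
  | B : Alt s
  | D : Alt s
  | C : Fin s → Alt s
  deriving DecidableEq

/-- Edge `j` is incident to vertex `i`. -/
def Inc {r s : ℕ} (e : Fin s → Fin r × Fin r) (i : Fin r) (j : Fin s) : Prop :=
  (e j).1 = i ∨ (e j).2 = i

/-- The strict partial order of the vertex voter `v_i`: the non-incident edge
alternatives (in index order) above everything else, together with the two mutually
incomparable chains `⟨I(u_i)⟩ ≻ d` and `b ≻ p`. -/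
def vVoter {r s : ℕ} (e : Fin s → Fin r × Fin r) (i : Fin r) :
    Alt s → Alt s → Prop := fun x y =>
  match x, y with
  | Alt.C j, Alt.C j' =>
      (¬ Inc e i j ∧ Inc e i j') ∨ (Inc e i j ∧ Inc e i j' ∧ j < j') ∨
        (¬ Inc e i j ∧ ¬ Inc e i j' ∧ j < j')
  | Alt.C _, Alt.D => True
  | Alt.C j, Alt.B => ¬ Inc e i j
  | Alt.C j, Alt.P => ¬ Inc e i j
  | Alt.B, Alt.P => True
  | _, _ => False

/-- The linear order `p ≻ c_1 ≻ … ≻ c_s ≻ b ≻ d` of the first group of auxiliary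
voters. -/
def aux1 {s : ℕ} : Alt s → Alt s → Prop := fun x y =>
  match x, y with
  | Alt.P, Alt.C _ => True
  | Alt.P, Alt.B => True
  | Alt.P, Alt.D => True
  | Alt.C j, Alt.C j' => j < j'
  | Alt.C _, Alt.B => True
  | Alt.C _, Alt.D => True
  | Alt.B, Alt.D => True
  | _, _ => False

/-- The linear order `p ≻ d ≻ c_1 ≻ … ≻ c_s ≻ b` of the second group of auxiliary
voters. -/
def aux2 {s : ℕ} : Alt s → Alt s → Prop := fun x y =>
  match x, y with
  | Alt.P, Alt.C _ => True
  | Alt.P, Alt.B => True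
  | Alt.P, Alt.D => True
  | Alt.D, Alt.C _ => True
  | Alt.D, Alt.B => True
  | Alt.C j, Alt.C j' => j < j'
  | Alt.C _, Alt.B => True
  | _, _ => False

/-- The partial profile of the reduction: `r` vertex voters, `r − h − 1` auxiliary voters
of the first kind, and `h` auxiliary voters of the second kind (`2r − 1` voters). -/
def profile11 (r s h : ℕ) (e : Fin s → Fin r × Fin r) :
    Fin (2 * r - 1) → Alt s → Alt s → Prop := fun idx =>
  if hi : (idx : ℕ) < r then vVoter e ⟨idx, hi⟩
  else if (idx : ℕ) < r + (r - h - 1) then aux1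
  else aux2

/-- The agenda `b ▷ d ▷ p ▷ c_s ▷ c_{s−1} ▷ … ▷ c_1` of the reduction. -/
def agenda11 (s : ℕ) : List (Alt s) :=
  [Alt.B, Alt.D, Alt.P] ++ ((List.finRange s).reverse.map Alt.C)

theorem cnt_split (a b c n : ℕ) (hn : n = a + (b + c)) (Q : Fin n → Prop) :
    (Finset.univ.filter Q).card =
      (Finset.univ.filter fun i : Fin a => Q ⟨i, by omega⟩).card +
      ((Finset.univ.filter fun i : Fin b => Q ⟨a + i, by omega⟩).card +
      (Finset.univ.filter fun i : Fin c => Q ⟨a + (b + i), by omega⟩).card) := by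
  subst hn
  simp only [Finset.card_filter, Fin.sum_univ_add]
  rfl

theorem fold_lem {s n : ℕ} (comp : Fin n → Alt s → Alt s → Prop)
    (hC : ∀ j j' : Fin s, j < j' → Beats comp (Alt.C j) (Alt.C j')) (w : Alt s)
    (l : List (Fin s)) (hl : l.Pairwise (· < ·)) :
    ((∀ j ∈ l, ¬ Beats comp (Alt.C j) w) ∧
      (l.map Alt.C).foldr (fun c win => if Beats comp c win then c else win) w = w) ∨
    ((∃ j ∈ l, Beats comp (Alt.C j) w) ∧ ∃ a t, l = a :: t ∧
      (l.map Alt.C).foldr (fun c win => if Beats comp c win then c else win) w = Alt.C a) := by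
  induction l with
  | nil => left; simp
  | cons a t ih =>
    rw [List.pairwise_cons] at hl
    rcases ih hl.2 with ⟨h1, h2⟩ | ⟨⟨j, hj, hb⟩, a', t', rfl, h2⟩
    · by_cases hb : Beats comp (Alt.C a) w
      · right
        refine ⟨⟨a, by simp, hb⟩, a, t, rfl, ?_⟩
        rw [List.map_cons, List.foldr_cons, h2, if_pos hb]
      · left
        refine ⟨by simpa using ⟨hb, h1⟩, ?_⟩
        rw [List.map_cons, List.foldr_cons, h2, if_neg hb]
    · right
      refine ⟨⟨j, List.mem_cons_of_mem _ hj, hb⟩, a, _, rfl, ?_⟩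
      rw [List.map_cons, List.foldr_cons, h2, if_pos (hC _ _ (hl.1 _ (by simp)))]

theorem amend_iff {s n : ℕ} (hs : 1 ≤ s) (comp : Fin n → Alt s → Alt s → Prop)
    (hC : ∀ j j' : Fin s, j < j' → Beats comp (Alt.C j) (Alt.C j')) (w1 w : Alt s)
    (hw1 : w1 = if Beats comp Alt.D Alt.B then Alt.D else Alt.B)
    (hw : w = if Beats comp Alt.P w1 then Alt.P else w1) :
    amendWinner comp (agenda11 s) = some (Alt.C ⟨0, hs⟩) ↔ ∃ j, Beats comp (Alt.C j) w := by
  have hwC : ∀ j, w ≠ Alt.C j := by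
    intro j; rw [hw, hw1]; split_ifs <;> simp
  have key : amendWinner comp (agenda11 s) = some (((List.finRange s).map Alt.C).foldr
      (fun c win => if Beats comp c win then c else win) w) := by
    simp only [amendWinner, agenda11, List.cons_append, List.nil_append, List.foldl_cons,
      List.map_reverse, List.foldl_reverse]
    rw [← hw1, ← hw]
  rw [key]
  obtain ⟨s, rfl⟩ : ∃ k, s = k + 1 := ⟨s - 1, by omega⟩
  rcases fold_lem comp hC w (List.finRange _) (List.pairwise_lt_finRange _) with
    ⟨h1, h2⟩ | ⟨⟨j, hj, hb⟩, a, t, hat, h2⟩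
  · rw [h2]
    constructor
    · intro h
      exact absurd (Option.some.inj h) (hwC _)
    · rintro ⟨j, hj⟩
      exact absurd hj (h1 j (List.mem_finRange _))
  · rw [h2]
    refine ⟨fun _ => ⟨j, hb⟩, fun _ => ?_⟩
    rw [List.finRange_succ] at hat
    have := (List.cons.inj hat).1
    rw [← this]; rfl

/-- number of vertex voters preferring x to y -/
noncomputable def VC {r s : ℕ} (comp : Fin (2 * r - 1) → Alt s → Alt s → Prop)
    (x y : Alt s) : ℕ :=
  (Finset.univ.filter fun i : Fin r => comp ⟨i, by omega⟩ x y).card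

def IsCompletion11 (r s h : ℕ) (e : Fin s → Fin r × Fin r)
    (comp : Fin (2 * r - 1) → Alt s → Alt s → Prop) : Prop :=
  ∀ idx, IsStrictTotalOrder (Alt s) (comp idx) ∧
        ∀ x y, profile11 r s h e idx x y → comp idx x y

section
variable {r s h : ℕ} {e : Fin s → Fin r × Fin r}
  {comp : Fin (2 * r - 1) → Alt s → Alt s → Prop}

theorem comp_asymm (hc : IsCompletion11 r s h e comp) {idx x y} (h1 : comp idx x y) :
    ¬ comp idx y x := by
  have := (hc idx).1
  exact asymm_of (comp idx) h1

theorem comp_trans (hc : IsCompletion11 r s h e comp) {idx x y z} (h1 : comp idx x y)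
    (h2 : comp idx y z) : comp idx x z := by
  have := (hc idx).1
  exact trans_of (comp idx) h1 h2

theorem comp_v (hc : IsCompletion11 r s h e comp) (i : Fin r) {x y} (h1 : vVoter e i x y) :
    comp ⟨i, by omega⟩ x y := by
  apply (hc _).2
  simp only [profile11]
  rw [dif_pos i.2]
  exact h1

theorem comp_a1 (hc : IsCompletion11 r s h e comp) (i : ℕ) (hi : i < r - h - 1) (hi' : r + i < 2 * r - 1)
    {x y : Alt s} (h1 : aux1 x y) : comp ⟨r + i, hi'⟩ x y := by
  apply (hc _).2
  simp only [profile11]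
  rw [dif_neg (by omega), if_pos (by omega)]
  exact h1

theorem comp_a2 (hc : IsCompletion11 r s h e comp) (i : ℕ) (hi' : r + (r - h - 1 + i) < 2 * r - 1)
    {x y : Alt s} (h1 : aux2 x y) : comp ⟨r + (r - h - 1 + i), hi'⟩ x y := by
  apply (hc _).2
  simp only [profile11]
  rw [dif_neg (by omega), if_neg (by omega)]
  exact h1

theorem pc_11 (hr : 3 ≤ r) (hhr : h ≤ r - 1) (hc : IsCompletion11 r s h e comp) {x y : Alt s} (h1 : aux1 x y) (h2 : aux2 x y) :
    prefCount comp x y = VC comp x y + (r - 1) := by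
  rw [prefCount, cnt_split r (r - h - 1) h _ (by omega), VC,
    Finset.filter_true_of_mem (p := fun i : Fin (r - h - 1) => _),
    Finset.filter_true_of_mem (p := fun i : Fin h => _)]
  · simp; omega
  · intro i _; exact comp_a2 hc _ _ h2
  · intro i _; exact comp_a1 hc _ i.2 _ h1

theorem pc_00 (hr : 3 ≤ r) (hhr : h ≤ r - 1) (hc : IsCompletion11 r s h e comp) {x y : Alt s} (h1 : aux1 y x) (h2 : aux2 y x) :
    prefCount comp x y = VC comp x y := by
  rw [prefCount, cnt_split r (r - h - 1) h _ (by omega), VC,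
    Finset.filter_false_of_mem (p := fun i : Fin (r - h - 1) => _),
    Finset.filter_false_of_mem (p := fun i : Fin h => _)]
  · simp
  · intro i _; exact comp_asymm hc (comp_a2 hc _ _ h2)
  · intro i _; exact comp_asymm hc (comp_a1 hc _ i.2 _ h1)

theorem pc_01 (hr : 3 ≤ r) (hhr : h ≤ r - 1) (hc : IsCompletion11 r s h e comp) {x y : Alt s} (h1 : aux1 y x) (h2 : aux2 x y) :
    prefCount comp x y = VC comp x y + h := by
  rw [prefCount, cnt_split r (r - h - 1) h _ (by omega), VC,
    Finset.filter_false_of_mem (p := fun i : Fin (r - h - 1) => _),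
    Finset.filter_true_of_mem (p := fun i : Fin h => _)]
  · simp
  · intro i _; exact comp_a2 hc _ _ h2
  · intro i _; exact comp_asymm hc (comp_a1 hc _ i.2 _ h1)

theorem pc_10 (hr : 3 ≤ r) (hhr : h ≤ r - 1) (hc : IsCompletion11 r s h e comp) {x y : Alt s} (h1 : aux1 x y) (h2 : aux2 y x) :
    prefCount comp x y = VC comp x y + (r - h - 1) := by
  rw [prefCount, cnt_split r (r - h - 1) h _ (by omega), VC,
    Finset.filter_true_of_mem (p := fun i : Fin (r - h - 1) => _),
    Finset.filter_false_of_mem (p := fun i : Fin h => _)]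
  · simp
  · intro i _; exact comp_asymm hc (comp_a2 hc _ _ h2)
  · intro i _; exact comp_a1 hc _ i.2 _ h1

theorem VC_all (x y : Alt s) (hx : ∀ i : Fin r, comp ⟨i, by omega⟩ x y) : VC comp x y = r := by
  rw [VC, Finset.filter_true_of_mem (by simpa using hx)]; simp

theorem VC_pos (x y : Alt s) (i : Fin r) (hx : comp ⟨i, by omega⟩ x y) : 1 ≤ VC comp x y := by
  rw [VC]; exact Finset.card_pos.2 ⟨i, by simpa using hx⟩

theorem VC_lt (x y : Alt s) (i : Fin r) (hx : ¬ comp ⟨i, by omega⟩ x y) : VC comp x y < r := by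
  have : VC comp x y < (Finset.univ : Finset (Fin r)).card := by
    apply Finset.card_lt_card
    rw [Finset.ssubset_univ_iff, ne_eq, Finset.filter_eq_self]
    push Not
    exact ⟨i, Finset.mem_univ _, hx⟩
  simpa using this

theorem ex_nonInc (hr : 3 ≤ r) (e : Fin s → Fin r × Fin r) (j : Fin s) : ∃ i, ¬ Inc e i j := by
  by_contra! hcon
  have : (Finset.univ : Finset (Fin r)) ⊆ {(e j).1, (e j).2} := by
    intro i _
    rcases hcon i with h | h <;> simp [← h]
  have h1 := Finset.card_le_card this
  have h2 := Finset.card_le_two (a := (e j).1) (b := (e j).2)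
  simp at h1; omega

theorem C_beats_C (hr : 3 ≤ r) (hhr : h ≤ r - 1) (hc : IsCompletion11 r s h e comp) (j j' : Fin s) (hj : j < j') :
    Beats comp (Alt.C j) (Alt.C j') := by
  have h1 := pc_11 hr hhr hc (x := Alt.C j) (y := Alt.C j') hj hj
  obtain ⟨i, hi⟩ := ex_nonInc hr e j
  have h2 := VC_pos (comp := comp) (Alt.C j) (Alt.C j') i
    (comp_v hc i (by simp only [vVoter]; tauto))
  rw [Beats]; omega

theorem C_beats_B (hr : 3 ≤ r) (hhr : h ≤ r - 1) (hc : IsCompletion11 r s h e comp) (j : Fin s) : Beats comp (Alt.C j) Alt.B := by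
  have h1 := pc_11 hr hhr hc (x := Alt.C j) (y := Alt.B) trivial trivial
  obtain ⟨i, hi⟩ := ex_nonInc hr e j
  have h2 := VC_pos (comp := comp) (Alt.C j) Alt.B i (comp_v hc i hi)
  rw [Beats]; omega

theorem C_beats_D (hr : 3 ≤ r) (hhr : h ≤ r - 1) (hc : IsCompletion11 r s h e comp) (j : Fin s) : Beats comp (Alt.C j) Alt.D := by
  have h1 := pc_10 hr hhr hc (x := Alt.C j) (y := Alt.D) trivial trivial
  have h2 := VC_all (comp := comp) (Alt.C j) Alt.D (fun i => comp_v hc i trivial)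
  rw [Beats]; omega

theorem not_P_B (hr : 3 ≤ r) (hhr : h ≤ r - 1) (hc : IsCompletion11 r s h e comp) : ¬ Beats comp Alt.P Alt.B := by
  have h1 := pc_11 hr hhr hc (x := Alt.P) (y := Alt.B) trivial trivial
  have h2 : VC comp Alt.P Alt.B = 0 := by
    rw [VC, Finset.card_eq_zero, Finset.filter_eq_empty_iff]
    intro i _
    exact comp_asymm hc (comp_v hc i trivial)
  rw [Beats]; omega

theorem main_iff (hr : 3 ≤ r) (hs : 1 ≤ s) (hhr : h ≤ r - 1) (hc : IsCompletion11 r s h e comp) :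
    amendWinner comp (agenda11 s) = some (Alt.C ⟨0, hs⟩) ↔
      ¬ (Beats comp Alt.D Alt.B ∧ Beats comp Alt.P Alt.D ∧
        ∀ j, ¬ Beats comp (Alt.C j) Alt.P) := by
  rw [amend_iff hs comp (C_beats_C hr hhr hc) _ _ rfl rfl]
  by_cases h1 : Beats comp Alt.D Alt.B
  · by_cases h2 : Beats comp Alt.P Alt.D
    · simp [h1, h2]
    · simp only [h1, h2, if_true, if_false]
      simpa using ⟨⟨0, hs⟩, C_beats_D hr hhr hc _⟩
  · simp only [h1, not_P_B hr hhr hc, if_false]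
    simpa using ⟨⟨0, hs⟩, C_beats_B hr hhr hc _⟩

end

/-- rank function for the completion -/
noncomputable def rk {r s : ℕ} (e : Fin s → Fin r × Fin r) (S : Finset (Fin r)) (i : Fin r) :
    Alt s → ℕ
  | Alt.P => if i ∈ S then s + 1 else 2 * s + 2
  | Alt.B => if i ∈ S then s else 2 * s + 1
  | Alt.D => if i ∈ S then 2 * s + 2 else 2 * s
  | Alt.C j => if Inc e i j then (if i ∈ S then s + 2 + j else s + j) else j

def rk1 {s : ℕ} : Alt s → ℕ
  | Alt.P => 0
  | Alt.B => s + 1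
  | Alt.D => s + 2
  | Alt.C j => 1 + j

def rk2 {s : ℕ} : Alt s → ℕ
  | Alt.P => 0
  | Alt.D => 1
  | Alt.B => s + 2
  | Alt.C j => 2 + j

noncomputable def RK (r s h : ℕ) (e : Fin s → Fin r × Fin r) (S : Finset (Fin r))
    (idx : Fin (2 * r - 1)) : Alt s → ℕ :=
  if hi : (idx : ℕ) < r then rk e S ⟨idx, hi⟩
  else if (idx : ℕ) < r + (r - h - 1) then rk1
  else rk2

theorem rk_inj {r s : ℕ} (e : Fin s → Fin r × Fin r) (S : Finset (Fin r)) (i : Fin r) :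
    Function.Injective (rk e S i) := by
  intro x y hxy
  rcases x with _ | _ | _ | j <;> rcases y with _ | _ | _ | j' <;> simp only [rk] at hxy <;>
    first
    | rfl
    | (congr 1; apply Fin.ext; split_ifs at hxy <;> omega)
    | (exfalso; split_ifs at hxy <;> omega)

theorem rk1_inj {s : ℕ} : Function.Injective (rk1 (s := s)) := by
  intro x y hxy
  rcases x with _ | _ | _ | j <;> rcases y with _ | _ | _ | j' <;> simp only [rk1] at hxy <;>
    first
    | rfl
    | (congr 1; apply Fin.ext; omega)
    | (exfalso; omega)

theorem rk2_inj {s : ℕ} : Function.Injective (rk2 (s := s)) := by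
  intro x y hxy
  rcases x with _ | _ | _ | j <;> rcases y with _ | _ | _ | j' <;> simp only [rk2] at hxy <;>
    first
    | rfl
    | (congr 1; apply Fin.ext; omega)
    | (exfalso; omega)

theorem sto_of_inj {α : Type*} (f : α → ℕ) (hf : Function.Injective f) :
    IsStrictTotalOrder α (fun x y => f x < f y) :=
  { trichotomous := fun x y h1 h2 => hf (by omega)
    irrefl := fun x => lt_irrefl _
    trans := fun x y z => lt_trans }

theorem RK_compl (r s h : ℕ) (e : Fin s → Fin r × Fin r) (S : Finset (Fin r)) :
    IsCompletion11 r s h e (fun idx x y => RK r s h e S idx x < RK r s h e S idx y) := by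
  intro idx
  refine ⟨sto_of_inj _ ?_, ?_⟩
  · unfold RK
    split_ifs
    · exact rk_inj _ _ _
    · exact rk1_inj
    · exact rk2_inj
  · intro x y
    simp only [profile11, RK]
    split_ifs
    · rcases x with _ | _ | _ | j <;> rcases y with _ | _ | _ | j' <;>
        simp only [rk, vVoter, Fin.lt_def] <;> intro hx <;> split_ifs <;>
        first
        | omega
        | (exfalso; tauto)
        | tauto
        | (have : (j : ℕ) < j' := by tauto
           omega)
    · rcases x with _ | _ | _ | j <;> rcases y with _ | _ | _ | j' <;>
        simp only [rk1, aux1, Fin.lt_def] <;> intro hx <;> first | omega | exact hx.elim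
    · rcases x with _ | _ | _ | j <;> rcases y with _ | _ | _ | j' <;>
        simp only [rk2, aux2, Fin.lt_def] <;> intro hx <;> first | omega | exact hx.elim

theorem RK_v (r s h : ℕ) (e : Fin s → Fin r × Fin r) (S : Finset (Fin r)) (i : Fin r)
    (hi : (i : ℕ) < 2 * r - 1) : RK r s h e S ⟨i, hi⟩ = rk e S i := by
  simp [RK]

/-- The edge alternative `c_1` is the amendment winner under the agenda
`b ▷ d ▷ p ▷ c_s ▷ … ▷ c_1` in every completion of the constructed partial profile iff
`G` has no vertex cover of size at most `h`. -/
theorem stmt12 (r s h : ℕ) (hr : 3 ≤ r) (hs : 1 ≤ s) (hh1 : 1 ≤ h) (hhr : h ≤ r - 1)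
    (e : Fin s → Fin r × Fin r) (he : ∀ j, (e j).1 ≠ (e j).2) :
    (∀ comp : Fin (2 * r - 1) → Alt s → Alt s → Prop,
      (∀ idx, IsStrictTotalOrder (Alt s) (comp idx) ∧
        ∀ x y, profile11 r s h e idx x y → comp idx x y) →
      amendWinner comp (agenda11 s) = some (Alt.C ⟨0, hs⟩)) ↔
    ¬ (∃ S : Finset (Fin r), S.card ≤ h ∧ ∀ j, (e j).1 ∈ S ∨ (e j).2 ∈ S) := by
  constructor
  · rintro hall ⟨S, hS, hcov⟩
    have hc := RK_compl r s h e S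
    have hm := (main_iff hr hs hhr hc).1 (hall _ hc)
    apply hm
    clear hm hall
    have hex : ∀ j, ∃ i ∈ S, Inc e i j := by
      intro j
      rcases hcov j with h | h
      · exact ⟨_, h, Or.inl rfl⟩
      · exact ⟨_, h, Or.inr rfl⟩
    refine ⟨?_, ?_, ?_⟩
    · have h1 := pc_01 hr hhr hc (x := Alt.D) (y := Alt.B) trivial trivial
      have h2 : Sᶜ.card ≤ VC (fun idx x y => RK r s h e S idx x < RK r s h e S idx y)
          Alt.D Alt.B := by
        apply Finset.card_le_card
        intro i hi
        rw [Finset.mem_compl] at hi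
        simp [RK_v, rk, hi]
      rw [Finset.card_compl, Fintype.card_fin] at h2
      rw [Beats]; omega
    · have h1 := pc_11 hr hhr hc (x := Alt.P) (y := Alt.D) trivial trivial
      obtain ⟨i, hi, -⟩ := hex ⟨0, hs⟩
      have h2 := VC_pos (comp := fun idx x y => RK r s h e S idx x < RK r s h e S idx y)
        Alt.P Alt.D i (by simp [RK_v, rk, hi]; omega)
      rw [Beats]; omega
    · intro j
      have h1 := pc_00 hr hhr hc (x := Alt.C j) (y := Alt.P) trivial trivial
      obtain ⟨i, hi, hij⟩ := hex j
      have h2 : VC (fun idx x y => RK r s h e S idx x < RK r s h e S idx y)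
          (Alt.C j) Alt.P < r := by
        apply VC_lt _ _ i
        simp [RK_v, rk, hi, hij]; omega
      rw [Beats]; omega
  · intro hno comp hc
    change IsCompletion11 r s h e comp at hc
    rw [main_iff hr hs hhr hc]
    rintro ⟨h1, -, h3⟩
    apply hno
    refine ⟨(Finset.univ.filter fun i : Fin r => comp ⟨i, by omega⟩ Alt.D Alt.B)ᶜ, ?_, ?_⟩
    · have h4 := pc_01 hr hhr hc (x := Alt.D) (y := Alt.B) trivial trivial
      rw [Finset.card_compl, Fintype.card_fin]
      rw [Beats] at h1
      rw [VC] at h4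
      omega
    · intro j
      have h4 := pc_00 hr hhr hc (x := Alt.C j) (y := Alt.P) trivial trivial
      have h5 : ∃ i : Fin r, ¬ comp ⟨i, by omega⟩ (Alt.C j) Alt.P := by
        by_contra! hcon
        have := VC_all (comp := comp) _ _ hcon
        apply h3 j
        rw [Beats]; omega
      obtain ⟨i, hi⟩ := h5
      have hinc : Inc e i j := by
        by_contra hn
        exact hi (comp_v hc i hn)
      have hPC : comp ⟨i, by omega⟩ Alt.P (Alt.C j) := by
        have := (hc ⟨i, by omega⟩).1
        rcases trichotomous_of (comp ⟨i, by omega⟩) Alt.P (Alt.C j) with h | h | h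
        · exact h
        · cases h
        · exact absurd h hi
      have hBD : comp ⟨i, by omega⟩ Alt.B Alt.D :=
        comp_trans hc (comp_v hc i (y := Alt.P) trivial) (comp_trans hc hPC (comp_v hc i trivial))
      have hmem : i ∈ (Finset.univ.filter fun i : Fin r => comp ⟨i, by omega⟩ Alt.D Alt.B)ᶜ := by
        simpa using comp_asymm hc hBD
      rcases hinc with h | h
      · left; rw [h]; exact hmem
      · right; rw [h]; exact hmem
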